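/- Reduction correctness: let 1 ≤ l ≤ k, let ω be a kCNF formula, set δ := σ(ω), write ω_{>k−l} := {c ∈ ω : |c| > k−l} and ω_{≤k−l} := {c ∈ ω : |c| ≤ k−l}, and suppose some assignment β : vars(ω) → {0,1} satisfies ω_{>k−l} but does not satisfy ω_{≤k−l}. Let ψ be an lCNF formula with vars(ψ) ∩ vars(ω) = ∅ and define ρ := ω_{>k−l} ∪ {c ∪ d : c ∈ ω_{≤k−l}, d ∈ ψ}. Then ρ is a kCNF formula and σ(ρ) > δ holds if and only if ψ is satisfiable. -/

import Mathlib

/-!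
An assignment satisfies all the clauses `c ∪ d` with `c ∈ A`, `d ∈ B` exactly when it satisfies
`A` or satisfies `B`. Hence `ρ` says "`ω_{>k-l}` holds, and `ω_{≤k-l}` or `ψ` holds", so `ω`
implies `ρ` and over a common set of variables `σ(ρ) ≥ σ(ω)`. If `ψ` is unsatisfiable, `ρ` and
`ω` have the same satisfying assignments. If `T` satisfies `ψ`, then gluing `S` on `vars(ω)` to
`T` on `vars(ψ)`, which is possible as the two sets are disjoint, gives an assignment that
satisfies `ρ` but not `ω`, and the inequality is strict.

The comparison is legitimate because the satisfaction probability may be computed over any finite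
superset of the occurring variables (`satProb_eq_of_subset`).
-/

open Finset

open scoped Classical

/-- A literal is a propositional variable (a natural number) together with a sign. -/
abbrev PLit := ℕ × Bool

/-- A clause is a finite set of literals. -/
abbrev PClause := Finset PLit

/-- A CNF formula is a finite set of clauses. -/
abbrev PCnf := Finset PClause

/-- A clause is valid if it contains no variable together with its negation. -/
def clauseValid (c : PClause) : Prop := ∀ v : ℕ, ¬((v, true) ∈ c ∧ (v, false) ∈ c)

/-- The variables occurring in a clause. -/
def clauseVars (c : PClause) : Finset ℕ := c.image Prod.fst

/-- A CNF formula is valid if all of its clauses are. -/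
def cnfValid (φ : PCnf) : Prop := ∀ c ∈ φ, clauseValid c

/-- The variables occurring in a CNF formula. -/
def cnfVars (φ : PCnf) : Finset ℕ := φ.sup clauseVars

/-- `φ` is a `k`CNF formula: all clauses are valid and have at most `k` literals. -/
def IsKCnf (k : ℕ) (φ : PCnf) : Prop := cnfValid φ ∧ ∀ c ∈ φ, c.card ≤ k

/-- An assignment is represented by the finite set `S` of variables set to true;
`litSat S l` says that the literal `l` is made true. -/
def litSat (S : Finset ℕ) (l : PLit) : Prop := if l.2 then l.1 ∈ S else l.1 ∉ S

/-- A clause is satisfied if it contains a literal made true. -/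
def clauseSat (S : Finset ℕ) (c : PClause) : Prop := ∃ l ∈ c, litSat S l

/-- A CNF formula is satisfied if all of its clauses are. -/
def cnfSat (S : Finset ℕ) (φ : PCnf) : Prop := ∀ c ∈ φ, clauseSat S c

/-- The satisfaction probability `σ(φ)`: the fraction of assignments
`β : vars(φ) → {0,1}` (represented as subsets of `cnfVars φ`) satisfying `φ`. -/
noncomputable def satProb (φ : PCnf) : ℝ :=
  ((cnfVars φ).powerset.filter (fun S => cnfSat S φ)).card / 2 ^ (cnfVars φ).card

/-- The set of satisfaction probabilities of `k`CNF formulas. -/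
def kcnfSpectrum (k : ℕ) : Set ℝ := {x | ∃ φ : PCnf, IsKCnf k φ ∧ satProb φ = x}

/-- A packing: a set of pairwise variable-disjoint clauses. -/
def IsPacking (π : PCnf) : Prop :=
  ∀ c ∈ π, ∀ c' ∈ π, c ≠ c' → Disjoint (clauseVars c) (clauseVars c')

/-- A sunflower with core `c`. -/
def IsSunflower (ψ : PCnf) (c : PClause) : Prop :=
  (∀ e ∈ ψ, c ⊆ e) ∧
    ∀ e ∈ ψ, ∀ e' ∈ ψ, e ≠ e' → clauseVars e ∩ clauseVars e' = clauseVars c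

/-- The link of a clause `c` in `φ`: all superclauses of `c` in `φ`. -/
noncomputable def link (φ : PCnf) (c : PClause) : PCnf := φ.filter (fun e => c ⊆ e)

/-- The literal `l` is made true by the assignment `β : V → {0,1}` represented by `S ⊆ V`. -/
def litTrue (V S : Finset ℕ) (l : PLit) : Prop :=
  l.1 ∈ V ∧ (if l.2 then l.1 ∈ S else l.1 ∉ S)

/-- The literal `l` is made false by the assignment `β : V → {0,1}` represented by `S ⊆ V`. -/
def litFalse (V S : Finset ℕ) (l : PLit) : Prop :=
  l.1 ∈ V ∧ ¬(if l.2 then l.1 ∈ S else l.1 ∉ S)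

/-- The restriction `φ|_β` of `φ` to the assignment `β : V → {0,1}` represented by
`S ⊆ V`: remove every clause containing a literal made true by `β`, delete from the
remaining clauses all literals made false by `β`, and add the unit clause `{v}` for
each `v ∈ S` and the unit clause `{¬v}` for each `v ∈ V \ S`. -/
noncomputable def restrict (φ : PCnf) (V S : Finset ℕ) : PCnf :=
  ((φ.filter fun c => ¬ ∃ l ∈ c, litTrue V S l).image fun c =>
      c.filter fun l => ¬ litFalse V S l)
    ∪ S.image (fun v => ({(v, true)} : PClause))
    ∪ (V \ S).image (fun v => ({(v, false)} : PClause))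

theorem mem_cnfVars {φ : PCnf} {v : ℕ} : v ∈ cnfVars φ ↔ ∃ c ∈ φ, ∃ x ∈ c, x.1 = v := by
  simp [cnfVars, clauseVars, Finset.mem_sup]

theorem cnfVars_mono {φ φ' : PCnf} (h : φ ⊆ φ') : cnfVars φ ⊆ cnfVars φ' := Finset.sup_mono h

/-- Satisfaction depends only on the values of the occurring variables. -/
theorem cnfSat_congr {φ : PCnf} {S T : Finset ℕ} (h : ∀ v ∈ cnfVars φ, v ∈ S ↔ v ∈ T) :
    cnfSat S φ ↔ cnfSat T φ := by
  refine forall₂_congr fun c hc => exists_congr fun x => and_congr_right fun hx => ?_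
  simp only [litSat, h x.1 (mem_cnfVars.2 ⟨c, hc, x, hx, rfl⟩)]

theorem clauseSat_union {S : Finset ℕ} {c d : PClause} :
    clauseSat S (c ∪ d) ↔ clauseSat S c ∨ clauseSat S d := by
  simp only [clauseSat, Finset.mem_union, or_and_right, exists_or]

theorem cnfSat_union {S : Finset ℕ} {A B : PCnf} :
    cnfSat S (A ∪ B) ↔ cnfSat S A ∧ cnfSat S B := by
  simp only [cnfSat, Finset.mem_union, or_imp, forall_and]

/-- The clausewise unions `c ∪ d` express the disjunction of two formulas, by distributivity. -/
theorem cnfSat_image_product {S : Finset ℕ} {A B : PCnf} :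
    cnfSat S ((A ×ˢ B).image fun p => p.1 ∪ p.2) ↔ cnfSat S A ∨ cnfSat S B := by
  constructor
  · intro h
    by_contra! hn
    simp only [cnfSat, not_forall] at hn
    obtain ⟨⟨c, hc, hcS⟩, d, hd, hdS⟩ := hn
    have := h _ (Finset.mem_image_of_mem (fun p : PClause × PClause => p.1 ∪ p.2)
      (Finset.mk_mem_product hc hd))
    exact (clauseSat_union.1 this).elim hcS hdS
  · intro h e he
    obtain ⟨⟨c, d⟩, hp, rfl⟩ := Finset.mem_image.1 he
    obtain ⟨hc, hd⟩ := Finset.mem_product.1 hp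
    exact clauseSat_union.2 (h.imp (fun h => h c hc) fun h => h d hd)

theorem cnfVars_image_product_subset {A B : PCnf} :
    cnfVars ((A ×ˢ B).image fun p => p.1 ∪ p.2) ⊆ cnfVars A ∪ cnfVars B := by
  intro v hv
  obtain ⟨e, he, x, hx, rfl⟩ := mem_cnfVars.1 hv
  obtain ⟨⟨c, d⟩, hp, rfl⟩ := Finset.mem_image.1 he
  obtain ⟨hc, hd⟩ := Finset.mem_product.1 hp
  rw [Finset.mem_union]
  exact (Finset.mem_union.1 hx).imp (fun hx => mem_cnfVars.2 ⟨c, hc, x, hx, rfl⟩)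
    fun hx => mem_cnfVars.2 ⟨d, hd, x, hx, rfl⟩

/-- The satisfaction probability may be computed over any finite superset `V` of the occurring
variables: each satisfying assignment of `cnfVars φ` has `2 ^ #(V \ cnfVars φ)` extensions. -/
theorem satProb_eq_of_subset {φ : PCnf} {V : Finset ℕ} (hV : cnfVars φ ⊆ V) :
    satProb φ = ((V.powerset.filter fun S => cnfSat S φ).card : ℝ) / 2 ^ V.card := by
  have hcard : (V.powerset.filter fun S => cnfSat S φ).card =
      ((cnfVars φ).powerset.filter fun S => cnfSat S φ).card * 2 ^ (V \ cnfVars φ).card := by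
    rw [← Finset.card_powerset, ← Finset.card_product]
    refine Finset.card_nbij' (fun S => (S ∩ cnfVars φ, S \ cnfVars φ)) (fun p => p.1 ∪ p.2)
      ?_ ?_ ?_ ?_
    · intro S hS
      simp only [Finset.coe_filter, Finset.mem_powerset, Set.mem_ofPred_eq] at hS
      simp only [Finset.mem_coe, Finset.mem_product, Finset.mem_filter, Finset.mem_powerset]
      refine ⟨⟨Finset.inter_subset_right, ?_⟩, Finset.sdiff_subset_sdiff hS.1 subset_rfl⟩
      exact (cnfSat_congr fun v hv => by simp [hv]).1 hS.2
    · rintro ⟨A, B⟩ h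
      simp only [Finset.mem_coe, Finset.mem_product, Finset.mem_filter,
        Finset.mem_powerset] at h
      simp only [Finset.mem_coe, Finset.mem_filter, Finset.mem_powerset]
      refine ⟨Finset.union_subset (h.1.1.trans hV) (h.2.trans Finset.sdiff_subset), ?_⟩
      refine (cnfSat_congr fun v hv => ?_).1 h.1.2
      have : v ∉ B := fun hB => (Finset.mem_sdiff.1 (h.2 hB)).2 hv
      simp [this]
    · intro S _
      ext v
      simp only [Finset.mem_union, Finset.mem_inter, Finset.mem_sdiff]
      tauto
    · rintro ⟨A, B⟩ h
      simp only [Finset.mem_coe, Finset.mem_product, Finset.mem_filter,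
        Finset.mem_powerset] at h
      have hA : ∀ v ∈ A, v ∈ cnfVars φ := fun v hv => h.1.1 hv
      have hB : ∀ v ∈ B, v ∉ cnfVars φ := fun v hv => (Finset.mem_sdiff.1 (h.2 hv)).2
      ext v
      · have := hA v; have := hB v
        simp only [Finset.mem_union, Finset.mem_inter]
        tauto
      · have := hA v; have := hB v
        simp only [Finset.mem_union, Finset.mem_sdiff]
        tauto
  have hVcard : V.card = (cnfVars φ).card + (V \ cnfVars φ).card := by
    rw [add_comm, Finset.card_sdiff_add_card_eq_card hV]
  rw [satProb, hcard, hVcard, pow_add]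
  push_cast
  rw [mul_div_mul_right _ _ (by positivity)]

theorem clauseValid_union {c d : PClause} (hc : clauseValid c) (hd : clauseValid d)
    (h : Disjoint (clauseVars c) (clauseVars d)) : clauseValid (c ∪ d) := by
  have key : ∀ v b b', (v, b) ∈ c → (v, b') ∈ d → False := fun v b b' h1 h2 =>
    Finset.disjoint_left.1 h (Finset.mem_image_of_mem Prod.fst h1)
      (Finset.mem_image.2 ⟨_, h2, rfl⟩)
  rintro v ⟨h1, h2⟩
  rcases Finset.mem_union.1 h1 with h1 | h1 <;> rcases Finset.mem_union.1 h2 with h2 | h2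
  · exact hc v ⟨h1, h2⟩
  · exact key v _ _ h1 h2
  · exact key v _ _ h2 h1
  · exact hd v ⟨h1, h2⟩

/-- **Reduction correctness.** Let `1 ≤ l ≤ k`, let `ω` be a `k`CNF formula whose
large clauses (of size `> k - l`) can be satisfied by some assignment `β` of
`vars(ω)` that falsifies the small clauses (of size `≤ k - l`), and let `ψ` be an
`l`CNF formula over disjoint variables. Then
`ρ := ω_{>k-l} ∪ {c ∪ d : c ∈ ω_{≤k-l}, d ∈ ψ}` is a `k`CNF formula and
`σ(ρ) > σ(ω)` iff `ψ` is satisfiable. -/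
theorem reduction_correctness (k l : ℕ) (hl : 1 ≤ l) (hlk : l ≤ k)
    (ω ψ : PCnf) (hω : IsKCnf k ω) (hψ : IsKCnf l ψ)
    (hdisj : Disjoint (cnfVars ω) (cnfVars ψ))
    (S : Finset ℕ) (hS : S ⊆ cnfVars ω)
    (hbig : cnfSat S (ω.filter fun c => k - l < c.card))
    (hsmall : ¬ cnfSat S (ω.filter fun c => c.card ≤ k - l)) :
    IsKCnf k ((ω.filter fun c => k - l < c.card) ∪
        ((ω.filter fun c => c.card ≤ k - l) ×ˢ ψ).image fun p => p.1 ∪ p.2) ∧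
      (satProb ((ω.filter fun c => k - l < c.card) ∪
          ((ω.filter fun c => c.card ≤ k - l) ×ˢ ψ).image fun p => p.1 ∪ p.2) >
          satProb ω ↔
        ∃ T : Finset ℕ, cnfSat T ψ) := by
  have hωeq : (ω.filter fun c => k - l < c.card) ∪ (ω.filter fun c => c.card ≤ k - l) = ω := by
    simp_rw [← not_le]
    rw [Finset.union_comm, Finset.filter_union_filter_not_eq]
  refine ⟨⟨fun e he => ?_, fun e he => ?_⟩, ?_⟩
  · rcases Finset.mem_union.1 he with he | he
    · exact hω.1 e (Finset.mem_filter.1 he).1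
    · obtain ⟨⟨c, d⟩, hp, rfl⟩ := Finset.mem_image.1 he
      obtain ⟨hc, hd⟩ := Finset.mem_product.1 hp
      have hc := (Finset.mem_filter.1 hc).1
      exact clauseValid_union (hω.1 c hc) (hψ.1 d hd)
        (hdisj.mono (Finset.le_sup (f := clauseVars) hc) (Finset.le_sup (f := clauseVars) hd))
  · rcases Finset.mem_union.1 he with he | he
    · exact hω.2 e (Finset.mem_filter.1 he).1
    · obtain ⟨⟨c, d⟩, hp, rfl⟩ := Finset.mem_image.1 he
      obtain ⟨hc, hd⟩ := Finset.mem_product.1 hp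
      have h1 : c.card ≤ k - l := (Finset.mem_filter.1 hc).2
      have h2 : d.card ≤ l := hψ.2 d hd
      have h3 : (c ∪ d).card ≤ c.card + d.card := Finset.card_union_le c d
      show (c ∪ d).card ≤ k
      omega
  · have hBω : cnfVars (ω.filter fun c => k - l < c.card) ⊆ cnfVars ω :=
      cnfVars_mono (Finset.filter_subset _ _)
    have hAω : cnfVars (ω.filter fun c => c.card ≤ k - l) ⊆ cnfVars ω :=
      cnfVars_mono (Finset.filter_subset _ _)
    have hωsat : ∀ R, cnfSat R ω ↔ cnfSat R (ω.filter fun c => k - l < c.card) ∧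
        cnfSat R (ω.filter fun c => c.card ≤ k - l) := fun R => by
      rw [← cnfSat_union, hωeq]
    generalize (ω.filter fun c => k - l < c.card) = B at *
    generalize (ω.filter fun c => c.card ≤ k - l) = A at *
    have hρsat : ∀ R, cnfSat R (B ∪ (A ×ˢ ψ).image fun p => p.1 ∪ p.2) ↔
        cnfSat R B ∧ (cnfSat R A ∨ cnfSat R ψ) := fun R => by
      rw [cnfSat_union, cnfSat_image_product]
    have hρvars : cnfVars (B ∪ (A ×ˢ ψ).image fun p => p.1 ∪ p.2) ⊆
        cnfVars ω ∪ cnfVars ψ := by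
      rw [cnfVars, Finset.sup_union]
      exact Finset.union_subset (hBω.trans Finset.subset_union_left)
        (cnfVars_image_product_subset.trans (Finset.union_subset_union_left hAω))
    rw [satProb_eq_of_subset hρvars, satProb_eq_of_subset
      (Finset.subset_union_left : cnfVars ω ⊆ cnfVars ω ∪ cnfVars ψ), gt_iff_lt,
      div_lt_div_iff_of_pos_right (by positivity), Nat.cast_lt]
    constructor
    · intro hlt
      by_contra! hn
      refine absurd hlt (not_lt.2 (Finset.card_le_card fun R hR => ?_))
      rw [Finset.mem_filter, hρsat] at hR
      rw [Finset.mem_filter, hωsat]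
      exact ⟨hR.1, hR.2.1, hR.2.2.resolve_right (hn R)⟩
    · rintro ⟨T, hT⟩
      -- `S` on the variables of `ω` glued to `T` on the variables of `ψ`
      have hRω : ∀ v ∈ cnfVars ω, v ∈ S ↔ v ∈ S ∪ (T ∩ cnfVars ψ) := fun v hv => by
        simp [Finset.disjoint_left.1 hdisj hv]
      have hRψ : ∀ v ∈ cnfVars ψ, v ∈ T ↔ v ∈ S ∪ (T ∩ cnfVars ψ) := fun v hv => by
        have : v ∉ S := fun h => Finset.disjoint_left.1 hdisj (hS h) hv
        simp [this, hv]
      have hRB := (cnfSat_congr fun v hv => hRω v (hBω hv)).1 hbig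
      have hRA := mt (cnfSat_congr fun v hv => hRω v (hAω hv)).2 hsmall
      have hRT := (cnfSat_congr hRψ).1 hT
      refine Finset.card_lt_card (Finset.ssubset_iff_of_subset (fun R hR => ?_) |>.2
        ⟨S ∪ (T ∩ cnfVars ψ), ?_, ?_⟩)
      · rw [Finset.mem_filter, hωsat] at hR
        rw [Finset.mem_filter, hρsat]
        exact ⟨hR.1, hR.2.1, Or.inl hR.2.2⟩
      · rw [Finset.mem_filter, hρsat, Finset.mem_powerset]
        exact ⟨Finset.union_subset_union hS Finset.inter_subset_right, hRB, Or.inr hRT⟩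
      · rw [Finset.mem_filter, hωsat]
        exact fun h => hRA h.2.2
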